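/- Let K be a field, n ≥ 1, and let R be a finitely generated subring of K. Let Δ be a commutative subgroup of GL_n(K) all of whose elements are semi-simple and such that every element of Δ and its inverse have all matrix entries in R (i.e., Δ is contained in the image of GL_n(R) in GL_n(K)). Then Δ is finitely generated. -/

import Mathlib

open Matrix

/-- An element of `GL n K` is semi-simple if the corresponding linear endomorphism
of `K^n` is a semisimple endomorphism. -/
def IsSemisimpleElt {n : ℕ} {K : Type*} [Field K] (g : GL (Fin n) K) : Prop :=
  Module.End.IsSemisimple ((g : Matrix (Fin n) (Fin n) K).mulVecLin)



open IsDedekindDomain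

theorem fg_of_inj {G H : Type*} [CommGroup G] [CommGroup H] [Group.FG H] (f : G →* H)
    (hf : Function.Injective f) : Group.FG G := by
  rw [GroupFG.iff_add_fg, ← Module.Finite.iff_addGroup_fg]
  have : Module.Finite ℤ (Additive H) := by
    rw [Module.Finite.iff_addGroup_fg, ← GroupFG.iff_add_fg]; infer_instance
  exact Module.Finite.of_injective (f.toAdditive).toIntLinearMap hf

theorem fg_of_ker {G H : Type*} [CommGroup G] [CommGroup H] [Group.FG H] (f : G →* H)
    (hf : Group.FG f.ker) : Group.FG G := by
  rw [GroupFG.iff_add_fg, ← Module.Finite.iff_addGroup_fg]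
  have : Module.Finite ℤ (Additive H) := by
    rw [Module.Finite.iff_addGroup_fg, ← GroupFG.iff_add_fg]; infer_instance
  rw [Module.finite_def]
  refine Submodule.fg_of_fg_map_of_fg_inf_ker (f.toAdditive).toIntLinearMap ?_ ?_
  · exact IsNoetherian.noetherian _
  · rw [inf_of_le_right le_top, AddMonoidHom.coe_toIntLinearMap_ker, MonoidHom.coe_toAdditive_ker,
      Submodule.fg_iff_addSubgroup_fg,
      AddSubgroup.toIntSubmodule_toAddSubgroup, ← AddGroup.fg_iff_addSubgroup_fg]
    exact (inferInstance : AddGroup.FG (Additive f.ker))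

instance fg_prod_inst {G H : Type*} [CommGroup G] [CommGroup H] [Group.FG G] [Group.FG H] :
    Group.FG (G × H) := by
  infer_instance

instance fg_pi_inst {ι : Type*} [Finite ι] {H : ι → Type*} [∀ i, CommGroup (H i)] [∀ i, Group.FG (H i)] :
    Group.FG (∀ i, H i) := by
  infer_instance

/-- The units of a finitely generated subring, modulo finitely many valuations. -/
theorem exists_val {D F : Type*} [CommRing D] [IsDedekindDomain D] [Field F] [Algebra D F]
    [IsFractionRing D F] (s : Finset F) :
    ∃ (S : Finset (HeightOneSpectrum D)), ∀ u : Fˣ,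
      (u : F) ∈ Subring.closure (s : Set F) →
      (∀ v ∈ S, v.valuationOfNeZero (K := F) u = 1) → (u : F) ∈ (algebraMap D F).range := by
  classical
  have hfin : (⋃ a ∈ s, HeightOneSpectrum.Support D a).Finite :=
    s.finite_toSet.biUnion fun a _ => HeightOneSpectrum.Support.finite D a
  refine ⟨hfin.toFinset, fun u hu h => ?_⟩
  refine HeightOneSpectrum.mem_integers_of_valuation_le_one F _ fun v => ?_
  by_cases hv : v ∈ hfin.toFinset
  · rw [← HeightOneSpectrum.valuationOfNeZero_eq, h v hv]; exact le_rfl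
  · have : Subring.closure (s : Set F) ≤ (v.valuation F).integer := by
      rw [Subring.closure_le]
      intro a ha
      by_contra hc
      apply hv
      simp only [Set.Finite.mem_toFinset, Set.mem_iUnion]
      exact ⟨a, ha, show 1 < v.valuation F a from lt_of_not_ge hc⟩
    exact this hu

open IntermediateField in
open scoped IntermediateField.algebraAdjoinAdjoin in
theorem exists_val_adjoin {k F : Type*} [Field k] [Field F] [Algebra k F] (x : F)
    (hx : Transcendental k x) [FiniteDimensional k⟮x⟯ F] [Algebra.IsSeparable k⟮x⟯ F]
    (s : Finset F) :
    ∃ (m : ℕ) (φ : Fˣ →* (Fin m → Multiplicative ℤ)), ∀ u : Fˣ,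
      (u : F) ∈ Subring.closure (s : Set F) → φ u = 1 →
      IsIntegral (Algebra.adjoin k {x}) (u : F) := by
  let e := (AlgEquiv.ofInjective (Polynomial.aeval (R := k) x) (transcendental_iff_injective.mp hx))
  have e2 : Polynomial k ≃ₐ[k] Algebra.adjoin k {x} :=
    e.trans (Subalgebra.equivOfEq _ _ (Algebra.adjoin_singleton_eq_range_aeval k x).symm)
  have : IsPrincipalIdealRing (Algebra.adjoin k {x}) :=
    IsPrincipalIdealRing.of_surjective e2.toRingEquiv.toRingHom e2.surjective
  have : IsDedekindDomain (integralClosure (Algebra.adjoin k {x}) F) :=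
    integralClosure.isDedekindDomain (Algebra.adjoin k {x}) k⟮x⟯ F
  have : IsFractionRing (integralClosure (Algebra.adjoin k {x}) F) F :=
    integralClosure.isFractionRing_of_finite_extension k⟮x⟯ F
  obtain ⟨S, hS⟩ := exists_val (D := integralClosure (Algebra.adjoin k {x}) F) s
  refine ⟨S.card, MonoidHom.pi fun i => (S.equivFin.symm i).1.valuationOfNeZero, fun u hu h => ?_⟩
  obtain ⟨d, hd⟩ := hS u hu fun v hv => by
    have h1 := congrFun h (S.equivFin ⟨v, hv⟩)
    rw [MonoidHom.pi_apply] at h1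
    simpa using h1
  rw [← hd]
  exact d.2

theorem isIntegral_of_both {k F : Type*} [Field k] [Field F] [Algebra k F] (x u : F)
    (h1 : IsIntegral (Algebra.adjoin k {x}) u) (h2 : IsIntegral (Algebra.adjoin k {x⁻¹}) u) :
    IsIntegral k u := by
  have key : ∀ (V : ValuationSubring F) (y : F), Set.range (algebraMap k F) ⊆ V.toSubring → y ∈ V →
      IsIntegral (Algebra.adjoin k {y}) u → u ∈ V := by
    intro V y hV hy hu
    have hle : (Algebra.adjoin k {y}).toSubring ≤ V.toSubring := by
      intro z hz
      induction hz using Algebra.adjoin_induction with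
      | mem z hz => rw [Set.mem_singleton_iff.mp hz]; exact hy
      | algebraMap r => exact hV ⟨r, rfl⟩
      | add _ _ _ _ h1 h2 => exact add_mem h1 h2
      | mul _ _ _ _ h1 h2 => exact mul_mem h1 h2
    have : IsIntegral V.toSubring u := by
      obtain ⟨p, hp, hp0⟩ := hu
      refine ⟨p.map (Subring.inclusion hle), hp.map _, ?_⟩
      rw [Polynomial.eval₂_map]
      exact hp0
    have h3 : IsIntegral V u := this
    obtain ⟨w, hw⟩ := IsIntegrallyClosed.isIntegral_iff.mp h3
    rw [← hw]; exact w.2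
  have hmem : u ∈ (⨅ V : {V : ValuationSubring F // Set.range (algebraMap k F) ⊆ V.toSubring}, V.1.toSubring) := by
    rw [Subring.mem_iInf]
    rintro ⟨V, hV⟩
    rcases V.mem_or_inv_mem x with h | h
    · exact key V x hV h h1
    · exact key V _ hV h h2
  rw [iInf_valuationSubring_superset] at hmem
  have hmem : IsIntegral (Subring.closure (Set.range (algebraMap k F))) u := hmem
  have hle : Subring.closure (Set.range (algebraMap k F)) = (algebraMap k F).range := by
    rw [← RingHom.coe_range, Subring.closure_eq]
  rw [hle] at hmem
  obtain ⟨p, hp, hp0⟩ := hmem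
  let e := RingEquiv.ofBijective (algebraMap k F).rangeRestrict
    ⟨fun a b h => (algebraMap k F).injective (congrArg Subtype.val h), (algebraMap k F).rangeRestrict_surjective⟩
  refine ⟨p.map e.symm.toRingHom, hp.map _, ?_⟩
  rw [Polynomial.eval₂_map]
  convert hp0
  ext a
  exact congrArg Subtype.val (e.apply_symm_apply a)

theorem base_number_field {F : Type*} [Field F] [NumberField F] (A : Subring F)
    (hA : ∃ s : Finset F, Subring.closure (s : Set F) = A) : Group.FG Aˣ := by
  obtain ⟨s, rfl⟩ := hA
  obtain ⟨S, hS⟩ := exists_val (D := NumberField.RingOfIntegers F) s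
  let ι : (Subring.closure (s : Set F))ˣ →* Fˣ := Units.map (Subring.closure (s : Set F)).subtype
  have hι : Function.Injective ι := Units.map_injective Subtype.val_injective
  let φ : (Subring.closure (s : Set F))ˣ →* (S → Multiplicative ℤ) :=
    MonoidHom.pi fun v => (v.1.valuationOfNeZero (K := F)).comp ι
  refine fg_of_ker φ ?_
  let j : (NumberField.RingOfIntegers F)ˣ →* Fˣ :=
    Units.map (algebraMap (NumberField.RingOfIntegers F) F).toMonoidHom
  have : Group.FG (NumberField.RingOfIntegers F)ˣ := Group.fg_iff_monoid_fg.mpr inferInstance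
  have hmem : ∀ u : φ.ker, ((ι u.1 : Fˣ) : F) ∈ (algebraMap (NumberField.RingOfIntegers F) F).range := fun u => hS (ι u.1) u.1.1.2 fun v hv => by
        have := congrFun (MonoidHom.mem_ker.mp u.2) ⟨v, hv⟩
        exact this
  refine fg_of_inj (H := j.range) ((ι.comp φ.ker.subtype).codRestrict j.range fun u => ?_) ?_
  · obtain ⟨a, ha⟩ := hmem u
    obtain ⟨b, hb⟩ := hmem u⁻¹
    have ha : algebraMap _ F a = ι u.1 := ha
    have hb : algebraMap _ F b = ((ι u.1)⁻¹ : Fˣ) := by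
      rw [← map_inv]; exact hb
    have hab : a * b = 1 := by
      apply FaithfulSMul.algebraMap_injective (NumberField.RingOfIntegers F) F
      rw [map_mul, ha, hb, map_one, Units.mul_inv]
    refine ⟨⟨a, b, hab, by rw [mul_comm, hab]⟩, ?_⟩
    ext
    exact ha
  · intro u v h
    exact Subtype.ext (hι (congrArg Subtype.val h))

theorem range_fg {A F : Type*} [CommRing A] [Field F] (f : A →+* F) (s : Finset A)
    (hs : Subring.closure (s : Set A) = ⊤) :
    ∃ s : Finset F, Subring.closure (s : Set F) = f.range := by
  classical
  refine ⟨s.image f, ?_⟩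
  rw [RingHom.range_eq_map, ← hs, RingHom.map_closure, Finset.coe_image]

theorem subring_gen {F : Type*} [CommRing F] (s : Finset F) :
    ∃ t : Finset (Subring.closure (s : Set F)),
      Subring.closure (t : Set (Subring.closure (s : Set F))) = ⊤ := by
  have hfin : ((Subtype.val : Subring.closure (s : Set F) → F) ⁻¹' (s : Set F)).Finite :=
    s.finite_toSet.preimage Subtype.val_injective.injOn
  exact ⟨hfin.toFinset, by
    rw [hfin.coe_toFinset, eq_top_iff]
    rintro ⟨y, hy⟩ -
    induction hy using Subring.closure_induction with
    | mem y hy => exact Subring.subset_closure hy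
    | zero => exact zero_mem _
    | one => exact one_mem _
    | add a b ha hb h1 h2 => exact add_mem h1 h2
    | neg a ha h1 => exact neg_mem h1
    | mul a b ha hb h1 h2 => exact mul_mem h1 h2⟩

theorem trdeg_aux.{u} {κ : Type*} {k F L : Type u} [Field κ] [Field k] [Field F] [Field L]
    [Algebra κ k] [Algebra κ F] [Algebra κ L] [Algebra k F] [Algebra k L]
    [IsScalarTower κ k F] [IsScalarTower κ k L] [Module.Finite k L] [Algebra.Transcendental k F]
    {d : ℕ} (hd : Algebra.trdeg κ F = d) : ∃ d' < d, Algebra.trdeg κ L = d' := by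
  have e1 := trdeg_add_eq κ k (A := F)
  have e2 := trdeg_add_eq κ k (A := L)
  have : Algebra.IsAlgebraic k L := Algebra.IsAlgebraic.of_finite k L
  have e3 := trdeg_eq_zero (R := k) (A := L)
  have e4 := trdeg_pos (R := k) (A := F)
  rw [e3, add_zero] at e2
  rw [hd] at e1
  obtain ⟨a, ha⟩ := Cardinal.lt_aleph0.mp
    ((self_le_add_right _ _).trans_lt (e1.trans_lt (Cardinal.natCast_lt_aleph0 (n := d))))
  obtain ⟨b, hb⟩ := Cardinal.lt_aleph0.mp
    ((self_le_add_left _ _).trans_lt (e1.trans_lt (Cardinal.natCast_lt_aleph0 (n := d))))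
  rw [ha, hb] at e1
  rw [hb] at e4
  refine ⟨a, ?_, by rw [← e2, ha]⟩
  norm_cast at e1 e4
  omega

open IntermediateField in
open scoped IntermediateField.algebraAdjoinAdjoin in
theorem units_fg_field.{u} (κ : Type) [Field κ] [PerfectField κ]
    (hbase : ∀ (F : Type u) [Field F] [Algebra κ F] [FiniteDimensional κ F] (A : Subring F),
      (∃ s : Finset F, Subring.closure (s : Set F) = A) → Group.FG Aˣ) (d : ℕ) :
    ∀ (F : Type u) [Field F] [Algebra κ F] [Algebra.EssFiniteType κ F],
      Algebra.trdeg κ F = d → ∀ (A : Subring F),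
      (∃ s : Finset F, Subring.closure (s : Set F) = A) → Group.FG Aˣ := by
  classical
  induction d using Nat.strong_induction_on with
  | _ d ih =>
  intro F _ _ _ hd A hA
  obtain ⟨t, ht, hsep⟩ := exists_isTranscendenceBasis_and_isSeparable_of_perfectField κ F
  rcases t.eq_empty_or_nonempty with rfl | ⟨x, hxt⟩
  · have : Algebra.IsAlgebraic κ F := by
      have := ht.isEmpty_iff_isAlgebraic.mp (by simp; infer_instance)
      exact this
    have : FiniteDimensional κ F :=
      Algebra.finite_of_essFiniteType_of_isAlgebraic
    exact hbase F A hA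
  obtain ⟨s, rfl⟩ := hA
  let k : IntermediateField κ F := adjoin κ ((t.erase x : Finset F) : Set F)
  have hkess : Algebra.EssFiniteType κ k :=
    IntermediateField.essFiniteType_iff.mpr ⟨t.erase x, rfl⟩
  have hx : Transcendental k x := by
    have h1 := ht.1.transcendental_adjoin (s := {i | i ≠ ⟨x, hxt⟩}) (i := ⟨x, hxt⟩) (by simp)
    have h2 : ((↑) : t → F) '' {i | i ≠ ⟨x, hxt⟩} = ((t.erase x : Finset F) : Set F) := by
      ext y
      simp [and_comm]
    rw [h2] at h1
    intro h3
    apply h1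
    exact (IsFractionRing.isAlgebraic_iff (Algebra.adjoin κ ((t.erase x : Finset F) : Set F)) k F).mpr h3
  have hsep' : Algebra.IsSeparable k⟮x⟯ F := by
    have hle : adjoin κ (t : Set F) ≤ k⟮x⟯.restrictScalars κ := by
      rw [adjoin_le_iff]
      intro y hy
      by_cases hyx : y = x
      · subst hyx; exact mem_adjoin_simple_self k y
      · have : y ∈ k := subset_adjoin κ _ (by simp [hyx]; simpa using hy)
        exact (k⟮x⟯).algebraMap_mem ⟨y, this⟩
    let _ : Algebra (adjoin κ (t : Set F)) k⟮x⟯ := (inclusion hle).toAlgebra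
    have : IsScalarTower (adjoin κ (t : Set F)) k⟮x⟯ F := IsScalarTower.of_algebraMap_eq fun _ => rfl
    exact Algebra.isSeparable_tower_top_of_isSeparable (adjoin κ (t : Set F)) k⟮x⟯ F
  have hessk : Algebra.EssFiniteType k F := Algebra.EssFiniteType.of_comp κ _ _
  have hess : Algebra.EssFiniteType k⟮x⟯ F := Algebra.EssFiniteType.of_comp k _ _
  have hfd : FiniteDimensional k⟮x⟯ F :=
    Algebra.finite_of_essFiniteType_of_isAlgebraic
  have hadj : k⟮x⁻¹⟯ = k⟮x⟯ := by
    apply le_antisymm <;> rw [adjoin_simple_le_iff]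
    · exact inv_mem (mem_adjoin_simple_self k x)
    · simpa using inv_mem (mem_adjoin_simple_self k x⁻¹)
  have hfd2 : FiniteDimensional k⟮x⁻¹⟯ F := by rw [hadj]; exact hfd
  have hsep2 : Algebra.IsSeparable k⟮x⁻¹⟯ F := by rw [hadj]; exact hsep'
  obtain ⟨m1, φ1, h1⟩ := exists_val_adjoin x hx s
  obtain ⟨m2, φ2, h2⟩ := exists_val_adjoin x⁻¹ (fun h => hx (by simpa using h.inv)) s
  let C : Subalgebra k F := Algebra.adjoin k (s : Set F)
  have hC : Algebra.FiniteType k C := (Subalgebra.fg_iff_finiteType C).mp ⟨s, rfl⟩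
  obtain ⟨M, hM⟩ := Ideal.exists_maximal C
  let _ : Field (C ⧸ M) := Ideal.Quotient.field M
  have hfin : Module.Finite k (C ⧸ M) := finite_of_finite_type_of_isJacobsonRing k (C ⧸ M)
  have hle : Subring.closure (s : Set F) ≤ C.toSubring :=
    Subring.closure_le.mpr Algebra.subset_adjoin
  let g : Subring.closure (s : Set F) →+* C ⧸ M :=
    (Ideal.Quotient.mk M).comp (Subring.inclusion hle)
  have hess2 : Algebra.EssFiniteType κ (C ⧸ M) := Algebra.EssFiniteType.comp κ k (C ⧸ M)
  have htr : ∃ d' < d, Algebra.trdeg κ (C ⧸ M) = d' := by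
    have hT : Algebra.Transcendental k F := ⟨x, hx⟩
    exact trdeg_aux (k := k) hd
  obtain ⟨d', hd', htr⟩ := htr
  obtain ⟨t', ht'⟩ := subring_gen s
  have hFG := ih d' hd' (C ⧸ M) htr g.range (range_fg g t' ht')
  let ι : (Subring.closure (s : Set F))ˣ →* Fˣ := Units.map (Subring.closure (s : Set F)).subtype
  have hι : Function.Injective ι := Units.map_injective Subtype.val_injective
  refine fg_of_inj (((φ1.comp ι).prod (φ2.comp ι)).prod (Units.map g.rangeRestrict.toMonoidHom)) ?_
  rw [injective_iff_map_eq_one]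
  intro u hu
  simp only [MonoidHom.prod_apply, Prod.mk_eq_one, MonoidHom.comp_apply] at hu
  obtain ⟨⟨hu1, hu2⟩, hu3⟩ := hu
  have hint : IsIntegral k (u.1 : F) :=
    isIntegral_of_both x _ (h1 (ι u) u.1.2 hu1) (h2 (ι u) u.1.2 hu2)
  have hg : g u.1 = 1 := congrArg (fun z => ((z.1 : g.range) : C ⧸ M)) hu3
  have hmem : (Subring.inclusion hle u.1 - 1 : C.toSubring) ∈ (M : Ideal C) := by
    apply Ideal.Quotient.eq_zero_iff_mem.mp
    rw [map_sub, map_one, sub_eq_zero]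
    exact hg
  by_contra hne
  have hne' : (u.1 : F) - 1 ≠ 0 := by
    intro h
    apply hne
    ext
    simpa [sub_eq_zero] using h
  have hinv : ((u.1 : F) - 1)⁻¹ ∈ C := by
    have hmem : (u.1 : F) - 1 ∈ C := sub_mem (hle u.1.2) (one_mem _)
    have hint' : IsIntegral k ((u.1 : F) - 1) := hint.sub isIntegral_one
    exact C.inv_mem_of_algebraic (x := ⟨_, hmem⟩) hint'.isAlgebraic
  apply hM.ne_top
  rw [Ideal.eq_top_iff_one]
  have := M.mul_mem_left ⟨_, hinv⟩ hmem
  convert this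
  ext
  exact (inv_mul_cancel₀ hne').symm

theorem units_fg_domain_aux {A : Type*} (F : Type*) [CommRing A] [IsDomain A]
    [hA : Algebra.FiniteType ℤ A] [Field F] [Algebra A F] [IsFractionRing A F] :
    Group.FG Aˣ := by
  have : Algebra.EssFiniteType A F := Algebra.EssFiniteType.of_isLocalization F (nonZeroDivisors A)
  have hZ : Algebra.EssFiniteType ℤ F := Algebra.EssFiniteType.comp ℤ A F
  obtain ⟨s, hs⟩ := hA.out
  have hs' : Subring.closure (s : Set A) = ⊤ := by
    rw [eq_top_iff]
    intro x _
    have hx : x ∈ Algebra.adjoin ℤ (s : Set A) := by rw [hs]; trivial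
    rw [Algebra.adjoin_int] at hx
    exact hx
  have hgen := range_fg (algebraMap A F) s hs'
  have hinj : Function.Injective (Units.map (algebraMap A F).rangeRestrict.toMonoidHom) :=
    Units.map_injective fun a b h =>
      FaithfulSMul.algebraMap_injective A F (congrArg Subtype.val h)
  suffices h : Group.FG (algebraMap A F).rangeˣ from fg_of_inj _ hinj
  obtain _ | ⟨p, hp, hpF⟩ := CharP.exists' F
  · let _ : Algebra ℚ F := DivisionRing.toRatAlgebra
    have : Algebra.EssFiniteType ℚ F := Algebra.EssFiniteType.of_comp ℤ ℚ F
    obtain ⟨d, hd⟩ := Cardinal.lt_aleph0.mp (trdeg_lt_aleph0 ℚ F)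
    refine units_fg_field ℚ ?_ d F hd _ hgen
    intro F _ _ _ A hA
    have : CharZero F := algebraRat.charZero F
    have : NumberField F :=
      { to_charZero := this
        to_finiteDimensional := by
          convert ‹FiniteDimensional ℚ F›
          exact Subsingleton.elim _ _ }
    exact base_number_field A hA
  · let _ : Algebra (ZMod p) F := ZMod.algebra F p
    have : Algebra.EssFiniteType (ZMod p) F := Algebra.EssFiniteType.of_comp ℤ (ZMod p) F
    obtain ⟨d, hd⟩ := Cardinal.lt_aleph0.mp (trdeg_lt_aleph0 (ZMod p) F)
    refine units_fg_field (ZMod p) ?_ d F hd _ hgen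
    intro F _ _ _ A hA
    have : Finite F := Module.finite_of_finite (ZMod p)
    infer_instance

theorem units_fg_domain {A : Type*} [CommRing A] [IsDomain A] [hA : Algebra.FiniteType ℤ A] :
    Group.FG Aˣ := units_fg_domain_aux (FractionRing A)

theorem fg_of_nilp {T G : Type*} [CommRing T] [Algebra.FiniteType ℤ T] [CommGroup G] (f : G →* T)
    (hf : ∀ g, IsNilpotent (f g - 1) → g = 1) : Group.FG G := by
  have : IsNoetherianRing T := Algebra.FiniteType.isNoetherianRing ℤ T
  have hfin : (minimalPrimes T).Finite := minimalPrimes.finite_of_isNoetherianRing T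
  have : Finite (minimalPrimes T) := hfin
  have hprime : ∀ p : minimalPrimes T, p.1.IsPrime := fun p => p.2.1.1
  have : ∀ p : minimalPrimes T, Group.FG (T ⧸ p.1)ˣ := fun p => by
    have : @Algebra.FiniteType ℤ (T ⧸ p.1) _ _ (Ring.toIntAlgebra _) :=
      Algebra.FiniteType.of_surjective (Ideal.Quotient.mk p.1).toIntAlgHom
        Ideal.Quotient.mk_surjective
    exact units_fg_domain
  let φ : G →* (∀ p : minimalPrimes T, (T ⧸ p.1)ˣ) :=
    MonoidHom.pi fun p => (Units.map (Ideal.Quotient.mk p.1).toMonoidHom).comp f.toHomUnits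
  refine fg_of_inj φ ?_
  rw [injective_iff_map_eq_one]
  intro g hg
  apply hf
  rw [← mem_nilradical, nilradical, ← Ideal.sInf_minimalPrimes, Submodule.mem_sInf]
  intro p hp
  have h1 : Ideal.Quotient.mk p (f g) = 1 := congrArg Units.val (congrFun hg ⟨p, hp⟩)
  rw [← Ideal.Quotient.eq_zero_iff_mem, map_sub, map_one, h1, sub_self]

theorem stmt_13 {K : Type*} [Field K] {n : ℕ} (hn : 1 ≤ n)
    (R : Subring K) (hR : ∃ s : Finset K, Subring.closure (↑s : Set K) = R)
    (Δ : Subgroup (GL (Fin n) K))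
    (hcomm : ∀ x ∈ Δ, ∀ y ∈ Δ, x * y = y * x)
    (hss : ∀ g ∈ Δ, IsSemisimpleElt g)
    (hent : ∀ g ∈ Δ, (∀ i j, (g : Matrix (Fin n) (Fin n) K) i j ∈ R) ∧
      (∀ i j, ((g⁻¹ : GL (Fin n) K) : Matrix (Fin n) (Fin n) K) i j ∈ R)) :
    Group.FG ↥Δ := by
  have hRft : Algebra.FiniteType ℤ R := by
    obtain ⟨s, rfl⟩ := hR
    obtain ⟨t, ht⟩ := subring_gen s
    refine ⟨⟨t, ?_⟩⟩
    rw [Algebra.adjoin_int, eq_top_iff]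
    intro x _
    show x ∈ Subring.closure (t : Set (Subring.closure (s : Set K)))
    rw [ht]; trivial
  have hRn : IsNoetherianRing R := Algebra.FiniteType.isNoetherianRing ℤ R
  let c : GL (Fin n) K → Matrix (Fin n) (Fin n) K := fun g => g
  let S : Set (Matrix (Fin n) (Fin n) K) := c '' Δ
  have hS : ∀ a ∈ S, ∀ b ∈ S, a * b = b * a := by
    rintro _ ⟨a, ha, rfl⟩ _ ⟨b, hb, rfl⟩
    exact congrArg Units.val (hcomm a ha b hb)
  let T := Algebra.adjoin R S
  let ψ : Matrix (Fin n) (Fin n) R →ₐ[R] Matrix (Fin n) (Fin n) K := (Algebra.ofId R K).mapMatrix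
  have hTle : T ≤ ψ.range := by
    refine Algebra.adjoin_le ?_
    rintro _ ⟨g, hg, rfl⟩
    refine ⟨fun i j => ⟨_, (hent g hg).1 i j⟩, ?_⟩
    ext i j
    rfl
  have hTfin : Module.Finite R T := by
    have : IsNoetherian R ψ.range := isNoetherian_of_surjective ψ.rangeRestrict.toLinearMap
      (LinearMap.range_eq_top.mpr ψ.rangeRestrict_surjective)
    exact Module.Finite.of_injective (Subalgebra.inclusion hTle).toLinearMap
      (Subalgebra.inclusion_injective hTle)
  have hcT := Algebra.isMulCommutative_adjoin R hS
  let _ : CommRing T := { (inferInstance : Ring T) with mul_comm := hcT.is_comm.comm }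
  have hft : Algebra.FiniteType R T := inferInstance
  have : IsScalarTower ℤ R T := IsScalarTower.of_algebraMap_eq' (RingHom.ext_int _ _)
  have hTft : @Algebra.FiniteType ℤ T _ _ (Ring.toIntAlgebra T) := Algebra.FiniteType.trans hRft hft
  let _ : CommGroup Δ := { (inferInstance : Group Δ) with
    mul_comm := fun a b => Subtype.ext (hcomm a.1 a.2 b.1 b.2) }
  let f : Δ →* T :=
    { toFun := fun g => ⟨c g.1, Algebra.subset_adjoin ⟨g.1, g.2, rfl⟩⟩
      map_one' := rfl
      map_mul' := fun a b => rfl }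
  refine fg_of_nilp f fun g hg => ?_
  have hnil : IsNilpotent (c g.1 - 1) := by
    obtain ⟨m, hm⟩ := hg
    exact ⟨m, congrArg Subtype.val hm⟩
  have hs1 : Module.End.IsSemisimple (Matrix.mulVecLin (c g.1) - 1) := by
    have h := hss g.1 g.2
    have h2 := (Module.End.isSemisimple_sub_algebraMap_iff (μ := (1 : K))).mpr h
    rwa [map_one] at h2
  have hlin : Matrix.mulVecLin (c g.1) - 1 = Matrix.toLinAlgEquiv' (c g.1 - 1) := by
    rw [map_sub, map_one]; rfl
  have h0 := Module.End.eq_zero_of_isNilpotent_isSemisimple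
    (by rw [hlin]; exact hnil.map _) hs1
  rw [hlin, map_eq_zero_iff _ (AlgEquiv.injective _), sub_eq_zero] at h0
  exact Subtype.ext (Units.ext h0)
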